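/- Let d ≥ 1 and let μ, ν be Borel probability measures on ℝ^d with finite first moments. Suppose μ and ν are NOT in convex order, i.e. there exists a convex function h : ℝ^d → ℝ, integrable with respect to both μ and ν, with ∫ h dμ > ∫ h dν. Then there exist a convex function f : ℝ^d → ℝ integrable with respect to both μ and ν, and a function g : ℝ^d → ℝ^d such that g(x) is a subgradient of f at x for every x (i.e. f(x') − f(x) ≥ ⟨g(x), x'−x⟩ for all x, x' ∈ ℝ^d), and such that for all (x,y) ∈ ℝ^d × ℝ^d: −f(x) + ∫ f dμ + f(y) − ∫ f dν − ⟨g(x), y−x⟩ > 0. -/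

import Mathlib

open MeasureTheory Metric RealInnerProductSpace

noncomputable section

/-!
The separating convex function `h` is itself the arbitrage payoff. At each point `x`, Hahn–Banach
separates `(x, h x)` from the interior of the epigraph of `h`; the separating hyperplane is not
vertical, so it is the graph of an affine function and its slope is a subgradient `g x` at `x`.
Adding the positive constant `∫ h ∂μ - ∫ h ∂ν` to the subgradient inequality
`0 ≤ h y - h x - ⟪g x, y - x⟫` makes it strict.
-/

open scoped Topology

section Epigraph

variable {E : Type*} [TopologicalSpace E] {f : E → ℝ} {s : Set E} {x : E}

theorem mem_interior_epigraph_of_lt (hs : s ∈ 𝓝 x) (hf : ContinuousAt f x) {t : ℝ}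
    (ht : f x < t) : (x, t) ∈ interior {p : E × ℝ | p.1 ∈ s ∧ f p.1 ≤ p.2} := by
  have hlt : ∀ᶠ p : E × ℝ in 𝓝 (x, t), f p.1 < p.2 :=
    (ContinuousAt.comp (x := (x, t)) hf continuousAt_fst).eventually_lt continuousAt_snd ht
  rw [mem_interior_iff_mem_nhds]
  filter_upwards [continuousAt_fst.eventually_mem hs, hlt] with p hps hp
  exact ⟨hps, hp.le⟩

variable (f s x) in
theorem notMem_interior_epigraph :
    (x, f x) ∉ interior {p : E × ℝ | p.1 ∈ s ∧ f p.1 ≤ p.2} := by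
  intro h
  have hvert : ∀ᶠ t in 𝓝 (f x), f x ≤ t :=
    ((Continuous.prodMk_right x).continuousAt.eventually_mem
      (mem_interior_iff_mem_nhds.mp h)).mono fun _ ht => ht.2
  obtain ⟨t, hlt, hle⟩ := hvert.exists_lt
  exact hlt.not_ge hle

end Epigraph

section Subgradient

variable {E : Type*} [AddCommGroup E] [Module ℝ E] [TopologicalSpace E]

/-- The continuous linear functional `l` is a subgradient at `x` of the function `f` restricted to
`s`. Subgradients live in the dual, so that the notion makes sense in any topological vector
space; in a Hilbert space a subgradient vector `v` is encoded as the functional `innerSL ℝ v`. -/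
def IsSubgradientWithinAt (f : E → ℝ) (l : StrongDual ℝ E) (s : Set E) (x : E) : Prop :=
  ∀ y ∈ s, l (y - x) ≤ f y - f x

variable [IsTopologicalAddGroup E] [ContinuousSMul ℝ E] {f : E → ℝ} {s : Set E} {x : E}

theorem exists_nonvertical_support_epigraph (hconv : ConvexOn ℝ s f) (hs : s ∈ 𝓝 x)
    (hcont : ContinuousAt f x) :
    ∃ L : StrongDual ℝ (E × ℝ), L (0, 1) < 0 ∧ ∀ y ∈ s, L (y, f y) ≤ L (x, f x) := by
  set A := {p : E × ℝ | p.1 ∈ s ∧ f p.1 ≤ p.2}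
  have hA : Convex ℝ A := hconv.convex_epigraph
  have habove : (x, f x + 1) ∈ interior A := mem_interior_epigraph_of_lt hs hcont (lt_add_one _)
  obtain ⟨L, hL⟩ := geometric_hahn_banach_open_point hA.interior isOpen_interior
    (notMem_interior_epigraph f s x)
  refine ⟨L, ?_, fun y hy => ?_⟩
  · have hvert : L (x, f x + 1) = L (x, f x) + L (0, 1) := by simp [← map_add]
    linarith [hL _ habove]
  · have hmem : (y, f y) ∈ closure (interior A) := by
      rw [hA.closure_interior_eq_closure_of_nonempty_interior ⟨_, habove⟩]
      exact subset_closure ⟨hy, le_rfl⟩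
    exact le_on_closure (fun p hp => (hL p hp).le) L.continuous.continuousOn
      continuousOn_const hmem

theorem exists_isSubgradientWithinAt (hconv : ConvexOn ℝ s f) (hs : s ∈ 𝓝 x)
    (hcont : ContinuousAt f x) : ∃ l : StrongDual ℝ E, IsSubgradientWithinAt f l s x := by
  obtain ⟨L, hneg, hL⟩ := exists_nonvertical_support_epigraph hconv hs hcont
  refine ⟨(-L (0, 1))⁻¹ • L.comp (.inl ℝ E ℝ), fun y hy => ?_⟩
  have hsplit : L (y, f y) - L (x, f x) = L (y - x, 0) + (f y - f x) * L (0, 1) := by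
    rw [← map_sub, ← smul_eq_mul, ← map_smul, ← map_add]
    simp
  change (-L (0, 1))⁻¹ * L (y - x, 0) ≤ f y - f x
  rw [inv_mul_le_iff₀ (neg_pos.mpr hneg)]
  linarith [hL y hy]

end Subgradient

section Hilbert

variable {E : Type*} [NormedAddCommGroup E] [InnerProductSpace ℝ E] [CompleteSpace E]

theorem exists_isSubgradientWithinAt_innerSL {f : E → ℝ} {s : Set E} {x : E}
    (hconv : ConvexOn ℝ s f) (hs : s ∈ 𝓝 x) (hcont : ContinuousAt f x) :
    ∃ v : E, IsSubgradientWithinAt f (innerSL ℝ v) s x := by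
  obtain ⟨l, hl⟩ := exists_isSubgradientWithinAt hconv hs hcont
  obtain ⟨v, rfl⟩ := (InnerProductSpace.toDual ℝ E).surjective l
  exact ⟨v, hl⟩

theorem stmt14_general [MeasurableSpace E] {μ ν : Measure E} {h : E → ℝ}
    (hconv : ConvexOn ℝ Set.univ h) (hcont : Continuous h)
    (hμ : Integrable h μ) (hν : Integrable h ν) (hlt : ∫ y, h y ∂ν < ∫ x, h x ∂μ) :
    ∃ f : E → ℝ, ∃ g : E → E,
      ConvexOn ℝ Set.univ f ∧ Integrable f μ ∧ Integrable f ν ∧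
      (∀ x x' : E, ⟪g x, x' - x⟫ ≤ f x' - f x) ∧
      (∀ x y : E, 0 < -f x + ∫ z, f z ∂μ + f y - ∫ z, f z ∂ν - ⟪g x, y - x⟫) := by
  choose g hg using fun x =>
    exists_isSubgradientWithinAt_innerSL hconv Filter.univ_mem (hcont.continuousAt (x := x))
  have hsub (x y : E) : ⟪g x, y - x⟫ ≤ h y - h x := hg x y (Set.mem_univ y)
  exact ⟨h, g, hconv, hμ, hν, hsub, fun x y => by linarith [hsub x y]⟩

end Hilbert

theorem stmt14 (d : ℕ) (hd : 1 ≤ d)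
    (μ ν : Measure (EuclideanSpace ℝ (Fin d)))
    [IsProbabilityMeasure μ] [IsProbabilityMeasure ν]
    (hμ : Integrable (fun x => ‖x‖) μ) (hν : Integrable (fun y => ‖y‖) ν)
    (hno : ∃ h : EuclideanSpace ℝ (Fin d) → ℝ, ConvexOn ℝ Set.univ h ∧
      Integrable h μ ∧ Integrable h ν ∧ ∫ y, h y ∂ν < ∫ x, h x ∂μ) :
    ∃ f : EuclideanSpace ℝ (Fin d) → ℝ, ∃ g : EuclideanSpace ℝ (Fin d) → EuclideanSpace ℝ (Fin d),
      ConvexOn ℝ Set.univ f ∧ Integrable f μ ∧ Integrable f ν ∧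
      (∀ x x' : EuclideanSpace ℝ (Fin d), ⟪g x, x' - x⟫ ≤ f x' - f x) ∧
      (∀ x y : EuclideanSpace ℝ (Fin d),
        0 < -f x + ∫ z, f z ∂μ + f y - ∫ z, f z ∂ν - ⟪g x, y - x⟫) := by
  obtain ⟨h, hconv, hhμ, hhν, hlt⟩ := hno
  exact stmt14_general hconv hconv.locallyLipschitz.continuous hhμ hhν hlt
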